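/- arXiv:2005.10175 — 2 statements merged into one kernel-verified Lean document; each statement's English description precedes it below -/
import Mathlib

section
/- For every θ ∈ ℝ^N and all a, a' ∈ A, the function h(θ) = exp(σ⟨θ, φ_a + φ_{a'}⟩) / ( Σ_{b∈A} exp(σ⟨θ, φ_b⟩) )² is differentiable and its gradient satisfies ‖∇h(θ)‖ ≤ 4σ. -/
open scoped RealInnerProductSpace BigOperators

/-!
The function is a product `s a * s a'` of two softmax probabilities with logits
`ℓ b = σ * ⟪θ, φ b⟫`. Since `s a = exp (ℓ a - log ∑ b, exp (ℓ b))` and the derivative of log-sum-exp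
is the softmax average `m = ∑ b, s b • ℓ' b` of the logit derivatives, `s a` has derivative
`s a • (ℓ' a - m)`. If every `‖ℓ' b‖` is at most `L`, then so is `‖m‖` by convexity of the ball,
and hence each factor, which lies in `[0, 1]`, has derivative of norm at most `2 * L`.
-/

/-- The probability of `a` under the softmax distribution with logits `x`; the ratio in the theorem
is a product of two of these. -/
noncomputable def softmax {A : Type*} [Fintype A] (x : A → ℝ) (a : A) : ℝ :=
  Real.exp (x a) / ∑ b, Real.exp (x b)

section Softmax

variable {A : Type*} [Fintype A]

lemma sum_exp_pos [Nonempty A] (x : A → ℝ) : 0 < ∑ b, Real.exp (x b) :=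
  Finset.sum_pos (fun b _ => Real.exp_pos (x b)) Finset.univ_nonempty

lemma softmax_nonneg (x : A → ℝ) (a : A) : 0 ≤ softmax x a := by
  unfold softmax
  positivity

lemma sum_softmax [Nonempty A] (x : A → ℝ) : ∑ a, softmax x a = 1 := by
  simp only [softmax, ← Finset.sum_div]
  exact div_self (sum_exp_pos x).ne'

lemma softmax_le_one (x : A → ℝ) (a : A) : softmax x a ≤ 1 := by
  have : Nonempty A := ⟨a⟩
  rw [← sum_softmax x]
  exact Finset.single_le_sum (fun b _ => softmax_nonneg x b) (Finset.mem_univ a)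

lemma softmax_eq_exp_sub_log_sum_exp (x : A → ℝ) (a : A) :
    softmax x a = Real.exp (x a - Real.log (∑ b, Real.exp (x b))) := by
  have : Nonempty A := ⟨a⟩
  rw [Real.exp_sub, Real.exp_log (sum_exp_pos x), softmax]

lemma exp_add_div_sum_exp_sq (x : A → ℝ) (a a' : A) :
    Real.exp (x a + x a') / (∑ b, Real.exp (x b)) ^ 2 = softmax x a * softmax x a' := by
  rw [softmax, softmax, div_mul_div_comm, Real.exp_add, sq]

lemma norm_sum_softmax_smul_le [Nonempty A] {V : Type*} [SeminormedAddCommGroup V]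
    [NormedSpace ℝ V] (x : A → ℝ) {v : A → V} {L : ℝ} (hv : ∀ b, ‖v b‖ ≤ L) :
    ‖∑ b, softmax x b • v b‖ ≤ L :=
  mem_closedBall_zero_iff.1 <| (convex_closedBall 0 L).sum_mem
    (fun b _ => softmax_nonneg x b) (sum_softmax x) fun b _ => mem_closedBall_zero_iff.2 (hv b)

end Softmax

section Derivative

variable {A E : Type*} [Fintype A] [NormedAddCommGroup E] [NormedSpace ℝ E]
  {ℓ : A → E → ℝ} {ℓ' : A → E →L[ℝ] ℝ} {θ : E} {L : ℝ}

lemma hasFDerivAt_log_sum_exp [Nonempty A] (hℓ : ∀ b, HasFDerivAt (ℓ b) (ℓ' b) θ) :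
    HasFDerivAt (fun t => Real.log (∑ b, Real.exp (ℓ b t)))
      (∑ b, softmax (fun c => ℓ c θ) b • ℓ' b) θ := by
  have hsum : HasFDerivAt (fun t => ∑ b, Real.exp (ℓ b t))
      (∑ b, Real.exp (ℓ b θ) • ℓ' b) θ :=
    HasFDerivAt.fun_sum fun b _ => (hℓ b).exp
  refine (hsum.log (sum_exp_pos fun b => ℓ b θ).ne').congr_fderiv ?_
  simp only [softmax, Finset.smul_sum, smul_smul, div_eq_inv_mul]

lemma hasFDerivAt_softmax (hℓ : ∀ b, HasFDerivAt (ℓ b) (ℓ' b) θ) (a : A) :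
    HasFDerivAt (fun t => softmax (fun b => ℓ b t) a)
      (softmax (fun b => ℓ b θ) a • (ℓ' a - ∑ b, softmax (fun c => ℓ c θ) b • ℓ' b)) θ := by
  have : Nonempty A := ⟨a⟩
  simpa only [softmax_eq_exp_sub_log_sum_exp] using
    ((hℓ a).fun_sub (hasFDerivAt_log_sum_exp hℓ)).exp

lemma norm_fderiv_softmax_le (hℓ : ∀ b, HasFDerivAt (ℓ b) (ℓ' b) θ) (hL : ∀ b, ‖ℓ' b‖ ≤ L)
    (a : A) : ‖fderiv ℝ (fun t => softmax (fun b => ℓ b t) a) θ‖ ≤ 2 * L := by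
  have : Nonempty A := ⟨a⟩
  have hdev : ‖ℓ' a - ∑ b, softmax (fun c => ℓ c θ) b • ℓ' b‖ ≤ 2 * L :=
    calc
      _ ≤ ‖ℓ' a‖ + ‖∑ b, softmax (fun c => ℓ c θ) b • ℓ' b‖ := norm_sub_le _ _
      _ ≤ L + L := add_le_add (hL a) (norm_sum_softmax_smul_le _ hL)
      _ = 2 * L := (two_mul L).symm
  rw [(hasFDerivAt_softmax hℓ a).fderiv, norm_smul, Real.norm_of_nonneg (softmax_nonneg _ a)]
  exact (mul_le_of_le_one_left (norm_nonneg _) (softmax_le_one _ a)).trans hdev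

lemma differentiableAt_softmax_mul_softmax (hℓ : ∀ b, HasFDerivAt (ℓ b) (ℓ' b) θ) (a a' : A) :
    DifferentiableAt ℝ (fun t => softmax (fun b => ℓ b t) a * softmax (fun b => ℓ b t) a') θ :=
  (hasFDerivAt_softmax hℓ a).differentiableAt.fun_mul (hasFDerivAt_softmax hℓ a').differentiableAt

lemma norm_fderiv_softmax_mul_softmax_le (hℓ : ∀ b, HasFDerivAt (ℓ b) (ℓ' b) θ)
    (hL : ∀ b, ‖ℓ' b‖ ≤ L) (a a' : A) :
    ‖fderiv ℝ (fun t => softmax (fun b => ℓ b t) a * softmax (fun b => ℓ b t) a') θ‖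
      ≤ 4 * L := by
  have norm_smul_fderiv_le (c d : A) :
      ‖softmax (fun b => ℓ b θ) c • fderiv ℝ (fun t => softmax (fun b => ℓ b t) d) θ‖ ≤ 2 * L := by
    rw [norm_smul, Real.norm_of_nonneg (softmax_nonneg _ c)]
    exact (mul_le_of_le_one_left (norm_nonneg _) (softmax_le_one _ c)).trans
      (norm_fderiv_softmax_le hℓ hL d)
  rw [fderiv_fun_mul (hasFDerivAt_softmax hℓ a).differentiableAt
    (hasFDerivAt_softmax hℓ a').differentiableAt]
  linarith [norm_add_le_of_le (norm_smul_fderiv_le a a') (norm_smul_fderiv_le a' a)]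

end Derivative

lemma norm_gradient_eq_norm_fderiv {F : Type*} [NormedAddCommGroup F] [InnerProductSpace ℝ F]
    [CompleteSpace F] (f : F → ℝ) (x : F) : ‖gradient f x‖ = ‖fderiv ℝ f x‖ :=
  LinearIsometryEquiv.norm_map _ _

lemma hasFDerivAt_const_mul_inner {F : Type*} [NormedAddCommGroup F] [InnerProductSpace ℝ F]
    (σ : ℝ) (v x : F) : HasFDerivAt (fun t => σ * ⟪t, v⟫) (σ • innerSL ℝ v) x := by
  simpa only [innerSL_apply_apply, real_inner_comm] using
    ((innerSL ℝ v).hasFDerivAt (x := x)).const_mul σ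

theorem softmax_ratio_gradient_bound_general {F A : Type*} [NormedAddCommGroup F]
    [InnerProductSpace ℝ F] [CompleteSpace F] [Fintype A]
    {φ : A → F} {R : ℝ} (hφ : ∀ a, ‖φ a‖ ≤ R) (σ : ℝ) (a a' : A) {h : F → ℝ}
    (hh : ∀ θ, h θ = Real.exp (σ * ⟪θ, φ a + φ a'⟫) / (∑ b, Real.exp (σ * ⟪θ, φ b⟫)) ^ 2)
    (θ : F) :
    DifferentiableAt ℝ h θ ∧ ‖gradient h θ‖ ≤ 4 * (|σ| * R) := by
  have h_eq : h = fun t =>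
      softmax (fun b => σ * ⟪t, φ b⟫) a * softmax (fun b => σ * ⟪t, φ b⟫) a' := by
    funext t
    rw [hh, inner_add_right, mul_add, exp_add_div_sum_exp_sq fun b => σ * ⟪t, φ b⟫]
  have hlogit (b : A) : HasFDerivAt (fun t => σ * ⟪t, φ b⟫) (σ • innerSL ℝ (φ b)) θ :=
    hasFDerivAt_const_mul_inner σ (φ b) θ
  have hnorm (b : A) : ‖σ • innerSL ℝ (φ b)‖ ≤ |σ| * R := by
    rw [norm_smul, innerSL_apply_norm, Real.norm_eq_abs]
    exact mul_le_mul_of_nonneg_left (hφ b) (abs_nonneg σ)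
  rw [norm_gradient_eq_norm_fderiv, h_eq]
  exact ⟨differentiableAt_softmax_mul_softmax hlogit a a',
    norm_fderiv_softmax_mul_softmax_le hlogit hnorm a a'⟩

/-- The function `h(θ) = e^{σ⟨θ, φ_a + φ_{a'}⟩} / (Σ_b e^{σ⟨θ, φ_b⟩})²` is
differentiable with `‖∇h(θ)‖ ≤ 4σ`. -/
theorem softmax_ratio_gradient_bound (N : ℕ) {A : Type*} [Fintype A] [Nonempty A]
    (φ : A → EuclideanSpace ℝ (Fin N)) (hφ : ∀ a, ‖φ a‖ ≤ 1)
    (σ : ℝ) (hσ : 0 < σ) (a a' : A)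
    (h : EuclideanSpace ℝ (Fin N) → ℝ)
    (hh : ∀ θ, h θ = Real.exp (σ * ⟪θ, φ a + φ a'⟫) /
      (∑ b : A, Real.exp (σ * ⟪θ, φ b⟫)) ^ 2)
    (θ : EuclideanSpace ℝ (Fin N)) :
    DifferentiableAt ℝ h θ ∧ ‖gradient h θ‖ ≤ 4 * σ := by
  simpa only [abs_of_pos hσ, mul_one] using
    softmax_ratio_gradient_bound_general hφ σ a a' hh θ
end

section
/- For all θ₁, θ₂ ∈ ℝ^N with ‖θ₁‖ ≤ R and ‖θ₂‖ ≤ R, ‖G(θ₁, ω*(θ₁)) − G(θ₂, ω*(θ₂))‖ ≤ k₃‖θ₁ − θ₂‖, where k₃ = (1 + γ + γR|A|k₁) + γ(1/λ)|A|(2k₁ + k₂R)(r_max + γR + R) + γ(1/λ)(1 + |A|Rk₁)(1 + γ + γR|A|k₁) and |A| is the cardinality of A. -/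
open scoped RealInnerProductSpace BigOperators

/-!
The products making up `G` have bounded Lipschitz factors, so their differences telescope. The
policy is `k₁`-Lipschitz by the mean value inequality. In the expected next value, the change of
`θ` is averaged against a probability vector and costs no factor `|A|`; only the change of the
probabilities does.
-/

section NormedSpace

theorem norm_smul_sub_smul_le {𝕜 E : Type*} [SeminormedRing 𝕜] [SeminormedAddCommGroup E]
    [Module 𝕜 E] [IsBoundedSMul 𝕜 E] (a b : 𝕜) (x y : E) :
    ‖a • x - b • y‖ ≤ ‖a‖ * ‖x - y‖ + ‖a - b‖ * ‖y‖ := by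
  have split : a • x - b • y = a • (x - y) + (a - b) • y := by
    rw [smul_sub, sub_smul, sub_add_sub_cancel]
  rw [split]
  exact norm_add_le_of_le (norm_smul_le _ _) (norm_smul_le _ _)

variable {E A : Type*} [SeminormedAddCommGroup E] [Fintype A]

theorem norm_sum_le_card_mul {f : A → E} {c : ℝ} (hf : ∀ a, ‖f a‖ ≤ c) :
    ‖∑ a, f a‖ ≤ Fintype.card A * c := by
  simpa using norm_sum_le_of_le Finset.univ fun a _ => hf a

variable [NormedSpace ℝ E]

theorem norm_sum_smul_le_of_mem_stdSimplex {p : A → ℝ} {u : A → E} {c : ℝ}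
    (hp : p ∈ stdSimplex ℝ A) (hu : ∀ a, ‖u a‖ ≤ c) : ‖∑ a, p a • u a‖ ≤ c := by
  simpa using (convex_closedBall (0 : E) c).sum_mem (fun a _ => hp.1 a) hp.2
    fun a _ => mem_closedBall_zero_iff.2 (hu a)

theorem norm_sum_smul_sub_sum_smul_le {p q : A → ℝ} {u v : A → E} {d ε R : ℝ}
    (hp : p ∈ stdSimplex ℝ A) (hpq : ∀ a, |p a - q a| ≤ ε)
    (huv : ∀ a, ‖u a - v a‖ ≤ d) (hv : ∀ a, ‖v a‖ ≤ R) :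
    ‖∑ a, p a • u a - ∑ a, q a • v a‖ ≤ d + Fintype.card A * (ε * R) := by
  have split : ∑ a, p a • u a - ∑ a, q a • v a =
      ∑ a, p a • (u a - v a) + ∑ a, (p a - q a) • v a := by
    rw [← Finset.sum_sub_distrib, ← Finset.sum_add_distrib]
    exact Finset.sum_congr rfl fun a _ => by module
  have weights_change (a : A) : ‖(p a - q a) • v a‖ ≤ ε * R := by
    rw [norm_smul, Real.norm_eq_abs]
    exact mul_le_mul (hpq a) (hv a) (norm_nonneg _) ((abs_nonneg _).trans (hpq a))
  rw [split]
  exact norm_add_le_of_le (norm_sum_smul_le_of_mem_stdSimplex hp huv)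
    (norm_sum_le_card_mul weights_change)

end NormedSpace

section InnerProductSpace

variable {E A : Type*} [NormedAddCommGroup E] [InnerProductSpace ℝ E]

theorem abs_real_inner_le_of_norm_le_one (x : E) {y : E} (hy : ‖y‖ ≤ 1) : |⟪x, y⟫| ≤ ‖x‖ :=
  (abs_real_inner_le_norm x y).trans (mul_le_of_le_one_right (norm_nonneg x) hy)

theorem norm_image_sub_le_of_norm_hasGradientWithinAt_le [CompleteSpace E]
    {f : E → ℝ} {f' : E → E} {s : Set E} {C : ℝ} (hs : Convex ℝ s)
    (hf : ∀ x ∈ s, HasGradientWithinAt f (f' x) s x) (hC : ∀ x ∈ s, ‖f' x‖ ≤ C)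
    {x y : E} (hx : x ∈ s) (hy : y ∈ s) : ‖f y - f x‖ ≤ C * ‖y - x‖ :=
  hs.norm_image_sub_le_of_norm_hasFDerivWithin_le (fun z hz => (hf z hz).hasFDerivWithinAt)
    (fun z hz => (LinearIsometryEquiv.norm_map _ _).trans_le (hC z hz)) hx hy

/-- The Greedy-GQ direction `G = δφ - γ⟨ω, φ⟩φ̂`, as a function of the temporal-difference
error `δ`, the expected next feature `ψ = φ̂` and the auxiliary weights `ω`. -/
def greedyGQDirection (γ : ℝ) (φ : E) (δ : ℝ) (ψ ω : E) : E :=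
  δ • φ - (γ * ⟪ω, φ⟫) • ψ

theorem norm_greedyGQDirection_sub_le {γ : ℝ} {φ : E} (hγ : 0 ≤ γ) (hφ : ‖φ‖ ≤ 1)
    (δ₁ δ₂ : ℝ) (ψ₁ ψ₂ ω₁ ω₂ : E) :
    ‖greedyGQDirection γ φ δ₁ ψ₁ ω₁ - greedyGQDirection γ φ δ₂ ψ₂ ω₂‖ ≤
      |δ₁ - δ₂| + γ * (‖ω₁‖ * ‖ψ₁ - ψ₂‖ + ‖ω₁ - ω₂‖ * ‖ψ₂‖) := by
  have split : greedyGQDirection γ φ δ₁ ψ₁ ω₁ - greedyGQDirection γ φ δ₂ ψ₂ ω₂ =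
      (δ₁ - δ₂) • φ - γ • (⟪ω₁, φ⟫ • ψ₁ - ⟪ω₂, φ⟫ • ψ₂) := by
    simp only [greedyGQDirection]
    module
  have error_term : ‖(δ₁ - δ₂) • φ‖ ≤ |δ₁ - δ₂| := by
    rw [norm_smul, Real.norm_eq_abs]
    exact mul_le_of_le_one_right (abs_nonneg _) hφ
  have correction_term : ‖⟪ω₁, φ⟫ • ψ₁ - ⟪ω₂, φ⟫ • ψ₂‖ ≤
      ‖ω₁‖ * ‖ψ₁ - ψ₂‖ + ‖ω₁ - ω₂‖ * ‖ψ₂‖ := by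
    refine (norm_smul_sub_smul_le _ _ _ _).trans ?_
    rw [← inner_sub_left, Real.norm_eq_abs, Real.norm_eq_abs]
    gcongr <;> exact abs_real_inner_le_of_norm_le_one _ hφ
  rw [split]
  refine norm_sub_le_of_le error_term ?_
  rw [norm_smul, Real.norm_of_nonneg hγ]
  exact mul_le_mul_of_nonneg_left correction_term hγ

variable [Fintype A]

/-- The temporal-difference error `δ(θ)` for reward `r`, where `p` is the vector of action
probabilities `π_θ`. -/
def tdError (γ r : ℝ) (φ : E) (φ' : A → E) (p : A → ℝ) (θ : E) : ℝ :=
  r + γ * ∑ a, p a * ⟪θ, φ' a⟫ - ⟪θ, φ⟫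

/-- The expected next feature `φ̂(θ)`, where `p` is the vector of action probabilities `π_θ` and
`g a` stands for `∇π_θ(a)`; it is the gradient of the expected next value
`θ ↦ ∑ a, π_θ(a)⟨θ, φ'_a⟩`. -/
def expectedNextFeature (φ' : A → E) (p : A → ℝ) (g : A → E) (θ : E) : E :=
  ∑ a, (⟪θ, φ' a⟫ • g a + p a • φ' a)

variable {φ : E} {φ' : A → E} {p q : A → ℝ} {g h : A → E} {x y : E} {γ ε η k R : ℝ}

theorem abs_tdError_sub_le (r : ℝ) (hγ : 0 ≤ γ) (hφ : ‖φ‖ ≤ 1) (hφ' : ∀ a, ‖φ' a‖ ≤ 1)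
    (hp : p ∈ stdSimplex ℝ A) (hpq : ∀ a, |p a - q a| ≤ ε) (hy : ‖y‖ ≤ R) :
    |tdError γ r φ φ' p x - tdError γ r φ φ' q y| ≤
      γ * (‖x - y‖ + Fintype.card A * (ε * R)) + ‖x - y‖ := by
  have split : tdError γ r φ φ' p x - tdError γ r φ φ' q y =
      γ * (∑ a, p a * ⟪x, φ' a⟫ - ∑ a, q a * ⟪y, φ' a⟫) - ⟪x - y, φ⟫ := by
    simp only [tdError, inner_sub_left]
    ring
  have next_value : |∑ a, p a * ⟪x, φ' a⟫ - ∑ a, q a * ⟪y, φ' a⟫| ≤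
      ‖x - y‖ + Fintype.card A * (ε * R) := by
    refine norm_sum_smul_sub_sum_smul_le (u := fun a => ⟪x, φ' a⟫) (v := fun a => ⟪y, φ' a⟫)
      hp hpq (fun a => ?_) fun a => (abs_real_inner_le_of_norm_le_one y (hφ' a)).trans hy
    rw [← inner_sub_left]
    exact abs_real_inner_le_of_norm_le_one _ (hφ' a)
  rw [split]
  refine (abs_sub _ _).trans (add_le_add ?_ (abs_real_inner_le_of_norm_le_one _ hφ))
  rw [abs_mul, abs_of_nonneg hγ]
  exact mul_le_mul_of_nonneg_left next_value hγ

theorem norm_expectedNextFeature_le (hφ' : ∀ a, ‖φ' a‖ ≤ 1) (hp : p ∈ stdSimplex ℝ A)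
    (hg : ∀ a, ‖g a‖ ≤ k) (hx : ‖x‖ ≤ R) :
    ‖expectedNextFeature φ' p g x‖ ≤ Fintype.card A * (R * k) + 1 := by
  have gradient_term (a : A) : ‖⟪x, φ' a⟫ • g a‖ ≤ R * k := by
    rw [norm_smul, Real.norm_eq_abs]
    exact mul_le_mul ((abs_real_inner_le_of_norm_le_one x (hφ' a)).trans hx) (hg a)
      (norm_nonneg _) ((norm_nonneg x).trans hx)
  rw [expectedNextFeature, Finset.sum_add_distrib]
  exact norm_add_le_of_le (norm_sum_le_card_mul gradient_term)
    (norm_sum_smul_le_of_mem_stdSimplex hp hφ')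

theorem norm_expectedNextFeature_sub_le (hφ' : ∀ a, ‖φ' a‖ ≤ 1)
    (hpq : ∀ a, |p a - q a| ≤ ε) (hh : ∀ a, ‖h a‖ ≤ k) (hgh : ∀ a, ‖g a - h a‖ ≤ η)
    (hx : ‖x‖ ≤ R) :
    ‖expectedNextFeature φ' p g x - expectedNextFeature φ' q h y‖ ≤
      Fintype.card A * (R * η + ‖x - y‖ * k + ε) := by
  have gradient_term (a : A) :
      ‖⟪x, φ' a⟫ • g a - ⟪y, φ' a⟫ • h a‖ ≤ R * η + ‖x - y‖ * k := by
    refine (norm_smul_sub_smul_le _ _ _ _).trans ?_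
    rw [← inner_sub_left, Real.norm_eq_abs, Real.norm_eq_abs]
    have hR : 0 ≤ R := (norm_nonneg x).trans hx
    gcongr
    · exact (abs_real_inner_le_of_norm_le_one x (hφ' a)).trans hx
    · exact hgh a
    · exact abs_real_inner_le_of_norm_le_one _ (hφ' a)
    · exact hh a
  have probability_term (a : A) : ‖p a • φ' a - q a • φ' a‖ ≤ ε := by
    rw [← sub_smul, norm_smul, Real.norm_eq_abs]
    exact (mul_le_of_le_one_right (abs_nonneg _) (hφ' a)).trans (hpq a)
  rw [expectedNextFeature, expectedNextFeature, ← Finset.sum_sub_distrib]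
  refine norm_sum_le_card_mul fun a => ?_
  rw [add_sub_add_comm]
  exact norm_add_le_of_le (gradient_term a) (probability_term a)

theorem G_omega_star_lipschitz_general [CompleteSpace E] {pol : E → A → ℝ} {g : E → A → E}
    {ω : E → E} {s : Set E} {k₁ k₂ B L : ℝ} (r : ℝ) (hγ : 0 ≤ γ) (hφ : ‖φ‖ ≤ 1)
    (hφ' : ∀ a, ‖φ' a‖ ≤ 1) (hs : Convex ℝ s) (hsR : ∀ θ ∈ s, ‖θ‖ ≤ R)
    (hpol : ∀ θ ∈ s, pol θ ∈ stdSimplex ℝ A)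
    (hg : ∀ θ ∈ s, ∀ a, HasGradientWithinAt (fun θ' => pol θ' a) (g θ a) s θ)
    (hk₁ : ∀ θ ∈ s, ∀ a, ‖g θ a‖ ≤ k₁)
    (hk₂ : ∀ θ₁ ∈ s, ∀ θ₂ ∈ s, ∀ a, ‖g θ₁ a - g θ₂ a‖ ≤ k₂ * ‖θ₁ - θ₂‖)
    (hB : ∀ θ ∈ s, ‖ω θ‖ ≤ B) (hL : ∀ θ₁ ∈ s, ∀ θ₂ ∈ s, ‖ω θ₁ - ω θ₂‖ ≤ L * ‖θ₁ - θ₂‖)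
    {θ₁ θ₂ : E} (hθ₁ : θ₁ ∈ s) (hθ₂ : θ₂ ∈ s) :
    ‖greedyGQDirection γ φ (tdError γ r φ φ' (pol θ₁) θ₁)
          (expectedNextFeature φ' (pol θ₁) (g θ₁) θ₁) (ω θ₁)
        - greedyGQDirection γ φ (tdError γ r φ φ' (pol θ₂) θ₂)
          (expectedNextFeature φ' (pol θ₂) (g θ₂) θ₂) (ω θ₂)‖ ≤
      ((1 + γ + γ * R * Fintype.card A * k₁)
        + γ * B * Fintype.card A * (2 * k₁ + k₂ * R)
        + γ * L * (1 + Fintype.card A * R * k₁)) * ‖θ₁ - θ₂‖ := by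
  have pol_lipschitz (a : A) : |pol θ₁ a - pol θ₂ a| ≤ k₁ * ‖θ₁ - θ₂‖ :=
    norm_image_sub_le_of_norm_hasGradientWithinAt_le hs (fun θ hθ => hg θ hθ a)
      (fun θ hθ => hk₁ θ hθ a) hθ₂ hθ₁
  have error_bound := abs_tdError_sub_le (x := θ₁) r hγ hφ hφ' (hpol θ₁ hθ₁) pol_lipschitz
    (hsR θ₂ hθ₂)
  have feature_bound := norm_expectedNextFeature_le hφ' (hpol θ₂ hθ₂) (hk₁ θ₂ hθ₂) (hsR θ₂ hθ₂)
  have feature_lipschitz := norm_expectedNextFeature_sub_le (y := θ₂) hφ' pol_lipschitz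
    (hk₁ θ₂ hθ₂) (hk₂ θ₁ hθ₁ θ₂ hθ₂) (hsR θ₁ hθ₁)
  have ω_bound := hB θ₁ hθ₁
  have ω_lipschitz := hL θ₁ hθ₁ θ₂ hθ₂
  have B_nonneg : 0 ≤ B := (norm_nonneg _).trans ω_bound
  have Ld_nonneg : 0 ≤ L * ‖θ₁ - θ₂‖ := (norm_nonneg _).trans ω_lipschitz
  grw [norm_greedyGQDirection_sub_le hγ hφ, error_bound, ω_bound, feature_lipschitz, ω_lipschitz,
    feature_bound]
  exact le_of_eq (by ring)

end InnerProductSpace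

/-- Lipschitz continuity of `θ ↦ G(θ, ω*(θ))`:
for `‖θ₁‖ ≤ R`, `‖θ₂‖ ≤ R`, `‖G(θ₁, ω*(θ₁)) − G(θ₂, ω*(θ₂))‖ ≤ k₃‖θ₁ − θ₂‖` with
`k₃ = (1 + γ + γR|A|k₁) + γ(1/λ)|A|(2k₁ + k₂R)(r_max + γR + R)
      + γ(1/λ)(1 + |A|Rk₁)(1 + γ + γR|A|k₁)`. -/
theorem G_omega_star_lipschitz (N : ℕ) {A : Type*} [Fintype A] [Nonempty A]
    (φ : EuclideanSpace ℝ (Fin N)) (hφ : ‖φ‖ ≤ 1)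
    (φ' : A → EuclideanSpace ℝ (Fin N)) (hφ' : ∀ a, ‖φ' a‖ ≤ 1)
    (γ : ℝ) (hγ : γ ∈ Set.Ioo (0 : ℝ) 1)
    (r rmax : ℝ) (hr : 0 ≤ r) (hrmax : r ≤ rmax)
    (pol : EuclideanSpace ℝ (Fin N) → A → ℝ)
    (hpol_nonneg : ∀ θ a, 0 ≤ pol θ a)
    (hpol_sum : ∀ θ, ∑ a : A, pol θ a = 1)
    (hpol_diff : ∀ θ a, DifferentiableAt ℝ (fun θ' => pol θ' a) θ)
    (k₁ k₂ : ℝ)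
    (hpol_grad : ∀ θ a, ‖gradient (fun θ' => pol θ' a) θ‖ ≤ k₁)
    (hpol_smooth : ∀ θ₁ θ₂ a,
      ‖gradient (fun θ' => pol θ' a) θ₁ - gradient (fun θ' => pol θ' a) θ₂‖ ≤
        k₂ * ‖θ₁ - θ₂‖)
    (δ : EuclideanSpace ℝ (Fin N) → ℝ)
    (hδ : ∀ θ, δ θ = r + γ * ∑ a : A, pol θ a * ⟪θ, φ' a⟫ - ⟪θ, φ⟫)
    (phihat : EuclideanSpace ℝ (Fin N) → EuclideanSpace ℝ (Fin N))
    (hphihat : ∀ θ, phihat θ = ∑ a : A,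
      (⟪θ, φ' a⟫ • gradient (fun θ' => pol θ' a) θ + pol θ a • φ' a))
    (G : EuclideanSpace ℝ (Fin N) → EuclideanSpace ℝ (Fin N) → EuclideanSpace ℝ (Fin N))
    (hG : ∀ θ ω, G θ ω = δ θ • φ - (γ * ⟪ω, φ⟫) • phihat θ)
    (R lam : ℝ) (hR : 0 < R) (hlam : 0 < lam)
    (ωstar : EuclideanSpace ℝ (Fin N) → EuclideanSpace ℝ (Fin N))
    (hωstar_bound : ∀ θ, ‖θ‖ ≤ R → ‖ωstar θ‖ ≤ (1 / lam) * (rmax + γ * R + R))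
    (hωstar_lip : ∀ θ₁ θ₂, ‖θ₁‖ ≤ R → ‖θ₂‖ ≤ R →
      ‖ωstar θ₁ - ωstar θ₂‖ ≤
        (1 / lam) * (1 + γ + γ * R * (Fintype.card A) * k₁) * ‖θ₁ - θ₂‖)
    (θ₁ θ₂ : EuclideanSpace ℝ (Fin N)) (hθ₁ : ‖θ₁‖ ≤ R) (hθ₂ : ‖θ₂‖ ≤ R) :
    ‖G θ₁ (ωstar θ₁) - G θ₂ (ωstar θ₂)‖ ≤
      ((1 + γ + γ * R * (Fintype.card A) * k₁)
        + γ * (1 / lam) * (Fintype.card A) * (2 * k₁ + k₂ * R) * (rmax + γ * R + R)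
        + γ * (1 / lam) * (1 + (Fintype.card A) * R * k₁)
            * (1 + γ + γ * R * (Fintype.card A) * k₁)) * ‖θ₁ - θ₂‖ := by
  have hball : Convex ℝ {θ : EuclideanSpace ℝ (Fin N) | ‖θ‖ ≤ R} := by
    simpa using convexOn_univ_norm.convex_le R
  simp only [hG, hδ, hphihat]
  refine (G_omega_star_lipschitz_general r hγ.1.le hφ hφ' hball (fun _ hθ => hθ)
    (fun θ _ => ⟨hpol_nonneg θ, hpol_sum θ⟩)
    (fun θ _ a => (hpol_diff θ a).hasFDerivAt.hasFDerivWithinAt.hasGradientWithinAt)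
    (fun θ _ => hpol_grad θ) (fun θ₁ _ θ₂ _ => hpol_smooth θ₁ θ₂) hωstar_bound
    (fun θ₁ h₁ θ₂ h₂ => hωstar_lip θ₁ θ₂ h₁ h₂) hθ₁ hθ₂).trans_eq ?_
  ring
end
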